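/- arXiv:1902.06763 — 4 statements merged into one kernel-verified Lean document; each statement's English description precedes it below -/
import Mathlib

section
/- Let n ≥ 1, let α = (α_1,…,α_n) be real numbers with α_i > 0 for all i, let t = (t_1,…,t_n) be real numbers with t_i ≥ 0 for all i, and let s = (s_1,…,s_n) ∈ ℂ^n with Re(s_i) > 1 for all i. Then the multiple series ζ_{n,t}(α; s) = Σ_{m = (m_1,…,m_n) ∈ ℕ^n} ∏_{i=1}^n ( (m_1+t_1) + ⋯ + (m_i+t_i) + α_i )^{−s_i} converges absolutely (its family of terms is summable). In particular, for t = 0 the generalized multiple Hurwitz zeta series ζ_n(α; s) = Σ_{m ∈ ℕ^n} ∏_{i=1}^n (m_1+⋯+m_i+α_i)^{−s_i} converges absolutely. -/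
theorem summable_prod_fin_aux (n : ℕ) (f : Fin n → ℕ → ℝ) (h0 : ∀ i k, 0 ≤ f i k)
    (hf : ∀ i, Summable (f i)) : Summable (fun m : Fin n → ℕ => ∏ i, f i (m i)) := by
  induction n with
  | zero => exact Summable.of_finite
  | succ n ih =>
    rw [← (Fin.consEquiv (fun _ : Fin (n+1) => ℕ)).summable_iff]
    have h := (hf 0).mul_of_nonneg (ih (fun i => f i.succ) (fun i k => h0 _ _) (fun i => hf _))
      (fun k => h0 _ _) (fun m => Finset.prod_nonneg (fun i _ => h0 _ _))
    refine h.congr ?_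
    intro x
    simp [Fin.prod_univ_succ, Fin.consEquiv]

/-- Absolute convergence (summability) of the shifted generalized multiple Hurwitz
zeta series `ζ_{n,t}(α; s) = Σ_{m ∈ ℕ^n} ∏_i ((m_1+t_1)+⋯+(m_i+t_i)+α_i)^{-s_i}`
when every `Re (s i) > 1`; the case `t = 0` is the generalized multiple Hurwitz
zeta function itself. -/
theorem generalized_multiple_hurwitz_zeta_summable
    (n : ℕ) (hn : 1 ≤ n) (α t : Fin n → ℝ)
    (hα : ∀ i, 0 < α i) (ht : ∀ i, 0 ≤ t i)
    (s : Fin n → ℂ) (hs : ∀ i, 1 < (s i).re) :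
    Summable (fun m : Fin n → ℕ =>
      ∏ i : Fin n,
        (((∑ j ∈ Finset.Iic i, ((m j : ℝ) + t j)) + α i : ℝ) : ℂ) ^ (-(s i))) := by
  have key := summable_prod_fin_aux n (fun i k => 1 / |(k : ℝ) + α i| ^ (s i).re)
    (fun i k => by positivity)
    (fun i => (Real.summable_one_div_nat_add_rpow (α i) (s i).re).2 (hs i))
  refine Summable.of_norm_bounded key ?_
  intro m
  rw [norm_prod]
  refine Finset.prod_le_prod (fun i _ => norm_nonneg _) ?_
  intro i _
  have h1 : (m i : ℝ) ≤ ∑ j ∈ Finset.Iic i, ((m j : ℝ) + t j) := by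
    have h := Finset.single_le_sum (s := Finset.Iic i) (f := fun j => (m j : ℝ) + t j)
      (fun j _ => add_nonneg (Nat.cast_nonneg _) (ht j)) (Finset.mem_Iic.2 (le_refl i))
    have := ht i
    linarith
  have h2 : (0 : ℝ) < (m i : ℝ) + α i := add_pos_of_nonneg_of_pos (Nat.cast_nonneg _) (hα i)
  have h3 : (m i : ℝ) + α i ≤ (∑ j ∈ Finset.Iic i, ((m j : ℝ) + t j)) + α i := by linarith
  rw [Complex.norm_cpow_eq_rpow_re_of_pos (lt_of_lt_of_le h2 h3), abs_of_pos h2, one_div,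
    ← Real.rpow_neg h2.le, Complex.neg_re]
  exact Real.rpow_le_rpow_of_nonpos h2 h3 (by linarith [hs i])
end

section
/- Let n ≥ 1, let α = (α_1,…,α_n) be real numbers with α_i > 0 for all i, and let s = (s_1,…,s_n) ∈ ℂ^n satisfy Re(s_j + s_{j+1} + ⋯ + s_n) > n − j + 1 for every 1 ≤ j ≤ n (in particular Re(s_n) > 1). Then the function x = (x_1,…,x_n) ↦ ∏_{i=1}^n (x_1 + ⋯ + x_i + α_i)^{−s_i} is Lebesgue integrable on [0,∞)^n, so that the integral Y_n(α; s) = ∫_{[0,∞)^n} ∏_{i=1}^n (x_1+⋯+x_i+α_i)^{−s_i} dx is well defined. -/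
open MeasureTheory Filter Topology

theorem abel_aux : ∀ (n : ℕ) (a l : Fin n → ℝ), Monotone l → (∀ i, 0 ≤ l i) →
    (∀ j, 0 ≤ ∑ i ∈ Finset.Ici j, a i) → 0 ≤ ∑ i, a i * l i := by
  intro n
  induction n with
  | zero => intro a l _ _ _; simp
  | succ n ih =>
    intro a l hl h0 ha
    have h1 := ih (fun i => a i.succ) (fun i => l i.succ - l 0)
      (fun i j hij => sub_le_sub_right (hl (Fin.succ_le_succ_iff.2 hij)) _)
      (fun i => sub_nonneg.2 (hl (Fin.zero_le _)))
      (fun j => by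
        have := ha j.succ
        rw [show Finset.Ici j.succ = (Finset.Ici j).map (Fin.succEmb n) by simp, Finset.sum_map] at this
        exact this)
    have h2 := ha 0
    rw [show Finset.Ici (0 : Fin (n+1)) = Finset.univ by ext; simp] at h2
    have h3 := mul_nonneg h2 (h0 0)
    rw [Fin.sum_univ_succ] at h3 ⊢
    simp only [mul_sub, Finset.sum_sub_distrib, ← Finset.sum_mul] at h1
    linarith

theorem shift_aux (α t : ℝ) (hα : 0 < α) :
    ∃ C : ℝ, 0 ≤ C ∧ ∀ S : ℝ, 0 ≤ S → (S + α) ^ t ≤ C * (S + 1) ^ t := by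
  rcases le_total 0 t with ht | ht
  · refine ⟨(max α 1) ^ t, by positivity, fun S hS => ?_⟩
    rw [← Real.mul_rpow (by positivity) (by positivity)]
    refine Real.rpow_le_rpow (by positivity) ?_ ht
    nlinarith [le_max_left α 1, le_max_right α 1]
  · have hm : 0 < min α 1 := lt_min hα one_pos
    refine ⟨(min α 1) ^ t, by positivity, fun S hS => ?_⟩
    rw [← Real.mul_rpow hm.le (by positivity)]
    refine Real.rpow_le_rpow_of_nonpos (by positivity) ?_ ht
    nlinarith [min_le_left α 1, min_le_right α 1]

theorem eps_aux (n : ℕ) (T : Fin n → ℝ) (hT : ∀ j : Fin n, (n : ℝ) - (j : ℕ) < T j) :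
    ∃ e : ℝ, 0 < e ∧ ∀ j : Fin n, ((n : ℝ) - (j : ℕ)) * (1 + e) < T j := by
  have h : ∀ᶠ e in 𝓝[>] (0:ℝ), ∀ j : Fin n, ((n : ℝ) - (j : ℕ)) * (1 + e) < T j := by
    rw [eventually_all]
    intro j
    have hc : Continuous (fun e : ℝ => ((n : ℝ) - (j : ℕ)) * (1 + e)) := by fun_prop
    exact (hc.tendsto 0 |>.mono_left nhdsWithin_le_nhds).eventually_lt_const
      (by simpa using hT j)
  obtain ⟨e, he, h'⟩ := (h.and self_mem_nhdsWithin).exists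
  exact ⟨e, h', he⟩

theorem prod_aux (n : ℕ) (σ : Fin n → ℝ) (r : ℝ) (hr : 0 ≤ r)
    (hσ : ∀ j : Fin n, ((n : ℝ) - (j : ℕ)) * r < ∑ i ∈ Finset.Ici j, σ i)
    (x : Fin n → ℝ) (hx : ∀ i, 0 ≤ x i) :
    ∏ i, ((∑ j ∈ Finset.Iic i, x j) + 1) ^ (-σ i) ≤ ∏ i, (1 + ‖x i‖) ^ (-r) := by
  have hS : ∀ i, 0 ≤ ∑ j ∈ Finset.Iic i, x j := fun i => Finset.sum_nonneg fun j _ => hx j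
  have hmono : Monotone (fun i => ∑ j ∈ Finset.Iic i, x j) := fun i j hij =>
    Finset.sum_le_sum_of_subset_of_nonneg (Finset.Iic_subset_Iic.2 hij) (fun k _ _ => hx k)
  have key := abel_aux n (fun i => σ i - r)
    (fun i => Real.log ((∑ j ∈ Finset.Iic i, x j) + 1))
    (fun i j hij => Real.log_le_log (by linarith [hS i]) (by linarith [hmono hij]))
    (fun i => Real.log_nonneg (by linarith [hS i]))
    (fun j => by
      have := hσ j
      rw [Finset.sum_sub_distrib, Finset.sum_const, Fin.card_Ici, nsmul_eq_mul,
        Nat.cast_sub j.2.le]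
      linarith)
  calc ∏ i, ((∑ j ∈ Finset.Iic i, x j) + 1) ^ (-σ i)
      ≤ ∏ i, ((∑ j ∈ Finset.Iic i, x j) + 1) ^ (-r) := by
        simp_rw [fun i (t : ℝ) => Real.rpow_def_of_pos
          (show 0 < (∑ j ∈ Finset.Iic i, x j) + 1 by linarith [hS i]) t]
        rw [← Real.exp_sum, ← Real.exp_sum]
        apply Real.exp_le_exp.2
        rw [← sub_nonneg, ← Finset.sum_sub_distrib]
        refine key.trans_eq (Finset.sum_congr rfl fun i _ => by ring)
    _ ≤ _ := by
        refine Finset.prod_le_prod (fun i _ => Real.rpow_nonneg (by linarith [hS i]) _)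
          fun i _ => Real.rpow_le_rpow_of_nonpos (by positivity) ?_ (by linarith)
        have := Finset.single_le_sum (f := x) (fun j _ => hx j) (Finset.mem_Iic.2 (le_refl i))
        rw [Real.norm_of_nonneg (hx i)]
        linarith


/-- Integrability of `x ↦ ∏_i (x_1+⋯+x_i+α_i)^{-s_i}` on `[0,∞)^n` when
`Re (s_j + ⋯ + s_n) > n - j + 1` for every `1 ≤ j ≤ n` (here `j : Fin n` is
the 0-based index, so the bound reads `n - j` in 0-based form). -/
theorem integral_function_integrableOn
    (n : ℕ) (hn : 1 ≤ n) (α : Fin n → ℝ) (hα : ∀ i, 0 < α i)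
    (s : Fin n → ℂ)
    (hs : ∀ j : Fin n, (n : ℝ) - (j : ℕ) < (∑ i ∈ Finset.Ici j, s i).re) :
    MeasureTheory.IntegrableOn
      (fun x : Fin n → ℝ =>
        ∏ i : Fin n, (((∑ j ∈ Finset.Iic i, x j) + α i : ℝ) : ℂ) ^ (-(s i)))
      (Set.univ.pi fun _ : Fin n => Set.Ici (0 : ℝ)) := by
  obtain ⟨e, he, hT⟩ := eps_aux n _ hs
  simp_rw [Complex.re_sum] at hT
  choose C hC0 hC using fun i => shift_aux (α i) (-(s i).re) (hα i)
  have hint : Integrable (fun x : Fin n → ℝ => ∏ i, (1 + ‖x i‖) ^ (-(1 + e))) := by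
    refine Integrable.fintype_prod (f := fun (_ : Fin n) (y : ℝ) => (1 + ‖y‖) ^ (-(1 + e)))
      (fun _ => ?_)
    exact integrable_one_add_norm (by simpa using he)
  refine Integrable.mono' ((hint.const_mul (∏ i, C i)).integrableOn) ?_ ?_
  · apply Measurable.aestronglyMeasurable
    refine Finset.measurable_prod _ fun i _ => Measurable.pow_const ?_ _
    fun_prop
  · refine (ae_restrict_iff' (MeasurableSet.univ_pi fun _ => measurableSet_Ici)).2
      (Eventually.of_forall fun x hx => ?_)
    have hx' : ∀ i, 0 ≤ x i := fun i => hx i (Set.mem_univ i)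
    have hS : ∀ i, 0 ≤ ∑ j ∈ Finset.Iic i, x j := fun i => Finset.sum_nonneg fun j _ => hx' j
    rw [norm_prod]
    calc _ = ∏ i, ((∑ j ∈ Finset.Iic i, x j) + α i) ^ (-(s i).re) := by
          refine Finset.prod_congr rfl fun i _ => ?_
          rw [Complex.norm_cpow_eq_rpow_re_of_pos (by linarith [hS i, hα i]), Complex.neg_re]
      _ ≤ ∏ i, (C i * ((∑ j ∈ Finset.Iic i, x j) + 1) ^ (-(s i).re)) :=
          Finset.prod_le_prod (fun i _ => Real.rpow_nonneg (by linarith [hS i, hα i]) _)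
            fun i _ => hC i _ (hS i)
      _ ≤ _ := by
          rw [Finset.prod_mul_distrib]
          exact mul_le_mul_of_nonneg_left
            (prod_aux n _ (1 + e) (by linarith) hT x hx') (Finset.prod_nonneg fun i _ => hC0 i)
end

section
/- (Raabe's formula, convergent range.) Let n ≥ 1, let α = (α_1,…,α_n) be real numbers with α_i > 0 for all i, and let s = (s_1,…,s_n) ∈ ℂ^n with Re(s_i) > 1 for all i. Then ∫_{[0,1]^n} ζ_{n,t}(α; s) dt = Y_n(α; s), where ζ_{n,t}(α; s) = Σ_{m ∈ ℕ^n} ∏_{i=1}^n ( (m_1+t_1)+⋯+(m_i+t_i)+α_i )^{−s_i}, Y_n(α; s) = ∫_{[0,∞)^n} ∏_{i=1}^n (x_1+⋯+x_i+α_i)^{−s_i} dx, and dt is Lebesgue measure on [0,1]^n. In particular the function t ↦ ζ_{n,t}(α; s) is integrable on [0,1]^n. -/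
open MeasureTheory Set in
theorem raabe_tsum_integrable {ι X : Type*} [Countable ι] [MeasurableSpace X] {μ : Measure X}
    {f : ι → X → ℂ} (hf : ∀ i, AEStronglyMeasurable (f i) μ)
    (h : ∑' i, ∫⁻ x, ‖f i x‖ₑ ∂μ ≠ ⊤) : Integrable (fun x => ∑' i, f i x) μ := by
  have hs : ∀ᵐ a ∂μ, Summable (fun n ↦ ‖f n a‖) :=
    summable_norm_of_tsum_eLpNorm_ne_top le_rfl hf (by simpa [eLpNorm_one_eq_lintegral_enorm] using h)
  refine ⟨?_, ?_⟩
  · refine aestronglyMeasurable_of_tendsto_ae (u := (Filter.atTop : Filter (Finset ι)))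
      (f := fun s x => ∑ i ∈ s, f i x) ?_ ?_
    · intro s
      exact Finset.aestronglyMeasurable_fun_sum s (fun i _ => hf i)
    · filter_upwards [hs] with a ha
      exact ha.of_norm.hasSum
  · refine lt_of_le_of_lt (lintegral_mono (fun x => enorm_tsum_le_tsum_enorm)) ?_
    rw [lintegral_tsum (fun i => (hf i).enorm)]
    exact h.lt_top

open MeasureTheory Set in
theorem raabe_general (n : ℕ) (f : (Fin n → ℝ) → ℂ)
    (hi : IntegrableOn f (Set.univ.pi fun _ : Fin n => Set.Ici (0 : ℝ))) :
    IntegrableOn (fun t : Fin n → ℝ => ∑' m : Fin n → ℕ, f (fun j => (m j : ℝ) + t j))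
      (Set.univ.pi fun _ : Fin n => Set.Icc (0 : ℝ) 1) ∧
    (∫ t in Set.univ.pi fun _ : Fin n => Set.Icc (0 : ℝ) 1,
      ∑' m : Fin n → ℕ, f (fun j => (m j : ℝ) + t j)) =
    ∫ x in Set.univ.pi fun _ : Fin n => Set.Ici (0 : ℝ), f x := by
  have hae : (Set.univ.pi fun _ : Fin n => Set.Icc (0 : ℝ) 1) =ᵐ[volume]
      (Set.univ.pi fun _ : Fin n => Set.Ico (0 : ℝ) 1) := 
    (Measure.pi_Ico_ae_eq_pi_Icc (μ := fun _ : Fin n => (volume : Measure ℝ))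
      (f := fun _ => 0) (g := fun _ => 1)).symm
  rw [integrableOn_congr_set_ae hae, setIntegral_congr_set hae]
  set C : Set (Fin n → ℝ) := Set.univ.pi fun _ : Fin n => Set.Ico (0 : ℝ) 1 with hC
  let v : (Fin n → ℕ) → (Fin n → ℝ) := fun m j => (m j : ℝ)
  let D : (Fin n → ℕ) → Set (Fin n → ℝ) := fun m =>
    Set.univ.pi fun j : Fin n => Set.Ico (m j : ℝ) (m j + 1)
  have hDm : ∀ m, MeasurableSet (D m) := fun m =>
    MeasurableSet.univ_pi fun _ => measurableSet_Ico
  have hfl : ∀ m x, x ∈ D m → ∀ j, ⌊x j⌋₊ = m j := by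
    intro m x hx j
    have := hx j (mem_univ j)
    exact (Nat.floor_eq_iff (le_trans (Nat.cast_nonneg _) this.1)).2 this
  have hDd : Pairwise (Function.onFun Disjoint D) := by
    intro m m' hmm
    refine Set.disjoint_left.2 fun x hx hx' => hmm ?_
    funext j
    rw [← hfl m x hx j, hfl m' x hx' j]
  have hU : (Set.univ.pi fun _ : Fin n => Set.Ici (0 : ℝ)) = ⋃ m, D m := by
    ext x
    simp only [mem_iUnion]
    constructor
    · intro hx
      exact ⟨fun j => ⌊x j⌋₊, fun j _ => ⟨Nat.floor_le (hx j (mem_univ j)), Nat.lt_floor_add_one _⟩⟩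
    · rintro ⟨m, hm⟩ j hj
      exact le_trans (Nat.cast_nonneg _) (hm j hj).1
  have hpre : ∀ m, (fun t => v m + t) ⁻¹' (D m) = C := by
    intro m
    ext t
    simp [D, C, v, Set.mem_pi]
  have hmp : ∀ m, MeasurePreserving (fun t => v m + t) (volume : Measure (Fin n → ℝ)) volume :=
    fun m => measurePreserving_add_left _ _
  have hme : ∀ m, MeasurableEmbedding (fun t : Fin n → ℝ => v m + t) :=
    fun m => measurableEmbedding_addLeft _
  rw [hU] at hi ⊢
  have hmeas : ∀ m, AEStronglyMeasurable (fun t => f (v m + t)) (volume.restrict C) := by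
    intro m
    have h1 : IntegrableOn f (D m) := hi.mono_set (subset_iUnion D m)
    rw [← (hmp m).integrableOn_comp_preimage (hme m), hpre m] at h1
    exact h1.1
  have hfin : ∑' m, ∫⁻ t in C, ‖f (v m + t)‖ₑ ≠ ⊤ := by
    have : ∀ m, ∫⁻ t in C, ‖f (v m + t)‖ₑ = ∫⁻ x in D m, ‖f x‖ₑ := by
      intro m
      rw [← hpre m]
      exact (hmp m).setLIntegral_comp_preimage_emb (hme m) (fun x => ‖f x‖ₑ) _
    simp_rw [this]
    rw [← lintegral_iUnion hDm hDd]
    exact hi.2.ne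
  refine ⟨raabe_tsum_integrable hmeas hfin, ?_⟩
  rw [integral_iUnion hDm hDd hi]
  have h2 := integral_tsum hmeas hfin
  refine h2.trans (tsum_congr fun m => ?_)
  rw [← hpre m]
  exact (hmp m).setIntegral_preimage_emb (hme m) f _

/-- Raabe's formula in the convergent range: for `Re (s i) > 1` for all `i`,
`∫_{[0,1]^n} ζ_{n,t}(α; s) dt = Y_n(α; s)`, where
`ζ_{n,t}(α; s) = Σ_{m ∈ ℕ^n} ∏_i ((m_1+t_1)+⋯+(m_i+t_i)+α_i)^{-s_i}` and
`Y_n(α; s) = ∫_{[0,∞)^n} ∏_i (x_1+⋯+x_i+α_i)^{-s_i} dx`; in particular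
`t ↦ ζ_{n,t}(α; s)` is integrable on `[0,1]^n`. -/
theorem raabe_formula
    (n : ℕ) (hn : 1 ≤ n) (α : Fin n → ℝ) (hα : ∀ i, 0 < α i)
    (s : Fin n → ℂ) (hs : ∀ i, 1 < (s i).re) :
    MeasureTheory.IntegrableOn
      (fun t : Fin n → ℝ => ∑' m : Fin n → ℕ,
        ∏ i : Fin n,
          (((∑ j ∈ Finset.Iic i, ((m j : ℝ) + t j)) + α i : ℝ) : ℂ) ^ (-(s i)))
      (Set.univ.pi fun _ : Fin n => Set.Icc (0 : ℝ) 1) ∧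
    (∫ t in Set.univ.pi fun _ : Fin n => Set.Icc (0 : ℝ) 1,
        ∑' m : Fin n → ℕ,
          ∏ i : Fin n,
            (((∑ j ∈ Finset.Iic i, ((m j : ℝ) + t j)) + α i : ℝ) : ℂ) ^ (-(s i)))
      = ∫ x in Set.univ.pi fun _ : Fin n => Set.Ici (0 : ℝ),
          ∏ i : Fin n, (((∑ j ∈ Finset.Iic i, x j) + α i : ℝ) : ℂ) ^ (-(s i)) := by
  refine raabe_general n (fun x : Fin n → ℝ =>
    ∏ i : Fin n, (((∑ j ∈ Finset.Iic i, x j) + α i : ℝ) : ℂ) ^ (-(s i))) ?_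
  have hg : MeasureTheory.IntegrableOn
      (fun x : Fin n → ℝ => ∏ i : Fin n, (x i + α i) ^ (-(s i).re))
      (Set.univ.pi fun _ : Fin n => Set.Ici (0 : ℝ)) := by
    unfold MeasureTheory.IntegrableOn
    rw [MeasureTheory.volume_pi, MeasureTheory.Measure.restrict_pi_pi]
    refine MeasureTheory.Integrable.fintype_prod
      (f := fun i (y : ℝ) => (y + α i) ^ (-(s i).re)) fun i => ?_
    have := integrableOn_add_rpow_Ioi_of_lt (a := -(s i).re) (c := 0) (m := α i)
      (by linarith [hs i]) (by linarith [hα i])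
    exact (integrableOn_Ici_iff_integrableOn_Ioi (by simp)).2 this
  refine MeasureTheory.Integrable.mono' hg ?_ ?_
  · refine Measurable.aestronglyMeasurable ?_
    fun_prop
  · refine (MeasureTheory.ae_restrict_iff'
      (MeasurableSet.univ_pi fun _ => measurableSet_Ici)).2 (Filter.Eventually.of_forall ?_)
    intro x hx
    have hx0 : ∀ j, 0 ≤ x j := fun j => hx j (Set.mem_univ j)
    rw [norm_prod]
    refine Finset.prod_le_prod (fun i _ => norm_nonneg _) fun i _ => ?_
    have h1 : x i ≤ ∑ j ∈ Finset.Iic i, x j :=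
      Finset.single_le_sum (fun j _ => hx0 j) (Finset.mem_Iic.2 le_rfl)
    have h2 : 0 < x i + α i := add_pos_of_nonneg_of_pos (hx0 i) (hα i)
    rw [Complex.norm_cpow_eq_rpow_re_of_pos (by linarith), Complex.neg_re]
    exact Real.rpow_le_rpow_of_nonpos h2 (by linarith) (by linarith [hs i])
end

section
/- (Shifted Raabe formula.) Let n ≥ 1, let α = (α_1,…,α_n) be real numbers with α_i > 0 for all i, let a = (a_1,…,a_n) be real numbers with a_i ≥ 0 for all i, and let s = (s_1,…,s_n) ∈ ℂ^n with Re(s_i) > 1 for all i. Define G : ℝ_{≥0}^n → ℂ by G(b_1,…,b_n) = Σ_{m ∈ ℕ^n} ∏_{i=1}^n ( Σ_{j=1}^{i} (m_j + b_j + α_j) )^{−s_i}. Then Y_{n,a}(α; s) = ∫_{[0,1]^n} G(a_1+t_1, …, a_n+t_n) dt, where Y_{n,a}(α; s) = ∫_{[α_1,∞)×⋯×[α_n,∞)} ∏_{i=1}^n ( x_1+⋯+x_i + a_1+⋯+a_i )^{−s_i} dx and dt, dx denote Lebesgue measure. -/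
/-- Shifted Raabe formula: with `G(b) = Σ_{m ∈ ℕ^n} ∏_i (Σ_{j≤i} (m_j+b_j+α_j))^{-s_i}`,
one has `Y_{n,a}(α; s) = ∫_{[0,1]^n} G(a+t) dt`, where
`Y_{n,a}(α; s) = ∫_{[α_1,∞)×⋯×[α_n,∞)} ∏_i (x_1+⋯+x_i+a_1+⋯+a_i)^{-s_i} dx`. -/
theorem shifted_raabe_formula
    (n : ℕ) (hn : 1 ≤ n) (α a : Fin n → ℝ) (hα : ∀ i, 0 < α i) (ha : ∀ i, 0 ≤ a i)
    (s : Fin n → ℂ) (hs : ∀ i, 1 < (s i).re) :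
    let G : (Fin n → ℝ) → ℂ := fun b =>
      ∑' m : Fin n → ℕ,
        ∏ i : Fin n,
          (((∑ j ∈ Finset.Iic i, ((m j : ℝ) + b j + α j)) : ℝ) : ℂ) ^ (-(s i))
    (∫ x in Set.univ.pi fun i : Fin n => Set.Ici (α i),
        ∏ i : Fin n,
          (((∑ j ∈ Finset.Iic i, x j) + ∑ j ∈ Finset.Iic i, a j : ℝ) : ℂ) ^ (-(s i)))
      = ∫ t in Set.univ.pi fun _ : Fin n => Set.Icc (0 : ℝ) 1,
          G (fun i => a i + t i) := by
  classical
  intro G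
  let f : (Fin n → ℝ) → ℂ := fun x => ∏ i : Fin n,
          (((∑ j ∈ Finset.Iic i, x j) + ∑ j ∈ Finset.Iic i, a j : ℝ) : ℂ) ^ (-(s i))
  let c : (Fin n → ℕ) → (Fin n → ℝ) := fun m i => (m i : ℝ) + α i
  let B : (Fin n → ℕ) → Set (Fin n → ℝ) := fun m =>
    Set.univ.pi fun i => Set.Ico (c m i) (c m i + 1)
  let Q : Set (Fin n → ℝ) := Set.univ.pi fun _ => Set.Ico (0 : ℝ) 1
  have hfm : Measurable f := by
    refine Finset.measurable_prod _ fun i _ => ?_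
    refine Measurable.pow_const ?_ _
    fun_prop
  have hS : MeasurableSet (Set.univ.pi fun i : Fin n => Set.Ici (α i)) :=
    MeasurableSet.univ_pi fun i => measurableSet_Ici
  have hBm : ∀ m, MeasurableSet (B m) := fun m => MeasurableSet.univ_pi fun i => measurableSet_Ico
  have hint : MeasureTheory.IntegrableOn f (Set.univ.pi fun i : Fin n => Set.Ici (α i)) := by
    have hg : MeasureTheory.IntegrableOn (fun x : Fin n → ℝ => ∏ i, (x i) ^ (-(s i).re))
        (Set.univ.pi fun i : Fin n => Set.Ici (α i)) := by
      unfold MeasureTheory.IntegrableOn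
      rw [MeasureTheory.volume_pi, MeasureTheory.Measure.restrict_pi_pi]
      refine MeasureTheory.Integrable.fintype_prod (f := fun i (y : ℝ) => y ^ (-(s i).re)) fun i => ?_
      have := integrableOn_Ioi_rpow_of_lt (a := -(s i).re) (by linarith [hs i]) (hα i)
      exact (integrableOn_Ici_iff_integrableOn_Ioi (by simp)).2 this
    refine MeasureTheory.Integrable.mono' hg hfm.aestronglyMeasurable ?_
    refine (MeasureTheory.ae_restrict_iff' hS).2 (Filter.Eventually.of_forall fun x hx => ?_)
    have hx' : ∀ i, α i ≤ x i := fun i => hx i trivial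
    have hx0 : ∀ i, 0 < x i := fun i => (hα i).trans_le (hx' i)
    simp only [f]
    rw [norm_prod]
    refine Finset.prod_le_prod (fun i _ => norm_nonneg _) fun i _ => ?_
    have h1 : x i ≤ ∑ j ∈ Finset.Iic i, x j :=
      Finset.single_le_sum (f := x) (fun j _ => (hx0 j).le) (Finset.mem_Iic.2 le_rfl)
    have h2 : 0 ≤ ∑ j ∈ Finset.Iic i, a j := Finset.sum_nonneg fun j _ => ha j
    rw [Complex.norm_cpow_eq_rpow_re_of_pos (by linarith [hx0 i])]
    exact Real.rpow_le_rpow_of_nonpos (hx0 i) (by linarith) (by simp; linarith [hs i])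
  have hU : (Set.univ.pi fun i : Fin n => Set.Ici (α i)) = ⋃ m, B m := by
    ext x
    simp only [Set.mem_iUnion, B, Set.mem_univ_pi, Set.mem_Ici, Set.mem_Ico, c]
    constructor
    · intro h
      refine ⟨fun i => ⌊x i - α i⌋₊, fun i => ?_⟩
      have h1 := Nat.floor_le (sub_nonneg.2 (h i))
      have h2 := Nat.lt_floor_add_one (x i - α i)
      constructor <;> linarith
    · rintro ⟨m, h⟩ i
      have := (h i).1
      have h0 : (0 : ℝ) ≤ m i := Nat.cast_nonneg _
      linarith
  have hd : Pairwise (Function.onFun Disjoint B) := by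
    intro m m' hne
    refine Set.disjoint_left.2 fun x hx hx' => hne ?_
    funext i
    have h1 := hx i trivial
    have h2 := hx' i trivial
    simp only [c, Set.mem_Ico] at h1 h2
    have h3 : (m i : ℝ) < (m' i : ℝ) + 1 := by linarith
    have h4 : (m' i : ℝ) < (m i : ℝ) + 1 := by linarith
    norm_cast at h3 h4
    omega
  have hpre : ∀ m, (fun t => t + c m) ⁻¹' (B m) = Q := by
    intro m
    ext t
    simp only [Set.mem_preimage, B, Q, Set.mem_univ_pi, Set.mem_Ico, Pi.add_apply]
    refine forall_congr' fun i => ?_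
    constructor <;> rintro ⟨h1, h2⟩ <;> constructor <;> linarith
  have hmp : ∀ m, MeasureTheory.MeasurePreserving (fun t => t + c m)
      (MeasureTheory.volume : MeasureTheory.Measure (Fin n → ℝ)) MeasureTheory.volume :=
    fun m => MeasureTheory.measurePreserving_add_right _ (c m)
  have hemb : ∀ m, MeasurableEmbedding (fun t : Fin n → ℝ => t + c m) :=
    fun m => measurableEmbedding_addRight (c m)
  rw [hU] at hint
  have htr : ∀ {E : Type} [NormedAddCommGroup E] [NormedSpace ℝ E] (g : (Fin n → ℝ) → E) (m),
      ∫ x in B m, g x = ∫ t in Q, g (t + c m) := by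
    intro E _ _ g m
    rw [← hpre m]
    exact ((hmp m).setIntegral_preimage_emb (hemb m) g (B m)).symm
  have hsum := MeasureTheory.hasSum_integral_iUnion hBm hd hint
  have hsumn := MeasureTheory.hasSum_integral_iUnion hBm hd hint.norm
  have hintm : ∀ m, MeasureTheory.Integrable (fun t => f (t + c m)) (MeasureTheory.volume.restrict Q) := by
    intro m
    have := (hmp m).integrableOn_comp_preimage (hemb m) (f := f) (s := B m)
    rw [hpre m] at this
    exact this.2 (hint.mono_set (Set.subset_iUnion B m))
  have hswap := MeasureTheory.hasSum_integral_of_summable_integral_norm hintm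
    (by simpa only [htr] using hsumn.summable)
  simp only [htr] at hsum
  change ∫ x in _, f x = _
  rw [hU, hsum.unique hswap]
  have hQ : Q =ᵐ[MeasureTheory.volume] Set.univ.pi fun _ : Fin n => Set.Icc (0 : ℝ) 1 :=
    MeasureTheory.Measure.pi_Ico_ae_eq_pi_Icc
  rw [MeasureTheory.setIntegral_congr_set hQ]
  congr 1
  funext t
  simp only [G, f, c]
  refine tsum_congr fun m => Finset.prod_congr rfl fun i _ => ?_
  congr 2
  rw [← Finset.sum_add_distrib]
  refine Finset.sum_congr rfl fun j _ => ?_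
  simp only [Pi.add_apply]
  ring
end
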